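/- arXiv:2308.13120 — 2 statements merged into one kernel-verified Lean document; each statement's English description precedes it below -/
import Mathlib

section
/- (Skryabin) Let H be a Hopf algebra over a field k which is Noetherian as a ring and residually finite-dimensional. Then the antipode S : H → H is bijective. -/
/-!
The argument works with coefficient matrices. Every `c : H` lies in a finite-dimensional left
coideal with basis `d`, and `Δ dᵢ = ∑ xᵢⱼ ⊗ dⱼ` defines a matrix `X` over `H` whose entries satisfy
`Δ xᵢⱼ = ∑ xᵢₗ ⊗ xₗⱼ` and `ε xᵢⱼ = δᵢⱼ`. The entrywise antipode `S(X)` is the two-sided inverse of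
`X`, and each `dᵢ` is a linear combination of entries of `X` (`exists_comatrix`).

*Injectivity* (`antipode_injective`). Let `N ⊆ Hⁿ` be the left submodule of rows `v` with
`∑ vᵢ ⊗ S(dᵢ) = 0`. As `S` reverses the comultiplication, `N` is stable under `v ↦ v S(X)`, so
`N ≤ N X`. The ascending chain `N ≤ N X ≤ N X² ≤ ⋯` stabilises, and `X` is invertible, so
`N X ≤ N`. If `c = ∑ aᵢ dᵢ` and `S c = 0`, then `a ∈ N`, hence `a X ∈ N`. This says
`∑ c₁ ⊗ S(c₂) = 0`, and applying `ε` to the second factor yields `c = 0`.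

*Surjectivity* (`antipode_surjective`). It suffices that the transpose `Xᵀ` has a left inverse `Z`:
applying `S` to `Z Xᵀ = 1` gives `S(Zₘₗ) = xₗₘ`, so that all entries of `X`, and with them `c`, lie
in the image of `S`. Let `J` be the left ideal of all `h` such that `h • 1 = Z Xᵀ` for some matrix
`Z`. Since `S` is injective, `Z ↦ Z Xᵀ` is injective on `Mₙ(H)`, and over a Noetherian ring the
image of an injective endomorphism of `Mₙ(H)` meets `H • 1` nontrivially, so `J ≠ 0`. Applying
`(S² ⊗ id) ∘ Δ` to `Z Xᵀ = h • 1` and cancelling the first tensor factors shows that `J` is a left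
coideal; this again uses that `S` is injective. Finally a nonzero left ideal `J` with
`Δ J ⊆ H ⊗ J` is all of `H`: by `h = ∑ h₁ ε(h₂)` some `y ∈ J` has `ε y ≠ 0`, and
`ε y = ∑ S(y₁) y₂ ∈ J` (`exists_left_inverse`).
-/

namespace NoetherianHopf

open Coalgebra HopfAlgebra TensorProduct

/-! ### Contractions of the first tensor factor -/

section Coalgebra

variable {k : Type*} [Field k] {H : Type*} [AddCommGroup H] [Module k H]

/-- The contraction `a ⊗ b ↦ g a • b` of the first tensor factor. -/
noncomputable def slice (g : H →ₗ[k] k) : H ⊗[k] H →ₗ[k] H :=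
  (TensorProduct.lid k H).toLinearMap ∘ₗ g.rTensor H

@[simp] lemma slice_tmul (g : H →ₗ[k] k) (a b : H) : slice g (a ⊗ₜ[k] b) = g a • b := by
  simp [slice]

/-- If all contractions of `t` lie in `J`, then `t` lies in `H ⊗ J`, expressed as a finite sum of pure
tensors with second factors in `J`. -/
lemma exists_sum_of_slice_mem (J : Submodule k H) (t : H ⊗[k] H)
    (ht : ∀ g : H →ₗ[k] k, slice g t ∈ J) :
    ∃ s : Finset (H × H), (∀ p ∈ s, p.2 ∈ J) ∧ t = ∑ p ∈ s, p.1 ⊗ₜ[k] p.2 := by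
  classical
  let b := Module.Basis.ofVectorSpace k H
  obtain ⟨c, hc⟩ := TensorProduct.eq_repr_basis_left b t
  have hcJ : ∀ i, c i ∈ J := by
    intro i
    have h1 := ht (b.coord i)
    rw [← hc, Finsupp.sum, map_sum] at h1
    by_cases hi : c i = 0
    · simp [hi]
    · simpa [Finsupp.single_apply, ite_smul, hi] using h1
  refine ⟨c.support.image fun i => (b i, c i), ?_, ?_⟩
  · intro p hp
    obtain ⟨i, -, rfl⟩ := Finset.mem_image.mp hp
    exact hcJ i
  · rw [Finset.sum_image (fun i _ j _ h => b.injective (Prod.ext_iff.mp h).1), ← hc, Finsupp.sum]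

end Coalgebra

variable {k : Type*} [Field k] {H : Type*} [Ring H] [HopfAlgebra k H]

/-! ### Coefficient matrices -/

variable (k) in
/-- A matrix over `H` satisfying the defining relations of a matrix coalgebra, as the matrix of
coefficients of a finite-dimensional comodule does. -/
structure IsComatrix {n : ℕ} (X : Fin n → Fin n → H) : Prop where
  comul_eq : ∀ i j, Coalgebra.comul (R := k) (X i j) = ∑ l, X i l ⊗ₜ[k] X l j
  counit_eq : ∀ i j, Coalgebra.counit (R := k) (X i j) = if i = j then 1 else 0

lemma IsComatrix.antipode_mul {n : ℕ} {X : Fin n → Fin n → H} (hX : IsComatrix k X) (i j : Fin n) :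
    ∑ l, antipode k (X i l) * X l j = if i = j then 1 else 0 := by
  have h := mul_antipode_rTensor_comul_apply (R := k) (X i j)
  rw [hX.comul_eq, hX.counit_eq] at h
  simpa [apply_ite] using h

lemma IsComatrix.mul_antipode {n : ℕ} {X : Fin n → Fin n → H} (hX : IsComatrix k X) (i j : Fin n) :
    ∑ l, X i l * antipode k (X l j) = if i = j then 1 else 0 := by
  have h := mul_antipode_lTensor_comul_apply (R := k) (X i j)
  rw [hX.comul_eq, hX.counit_eq] at h
  simpa [apply_ite] using h

/-- Every element `c` is a linear combination of a basis `d` of some finite-dimensional left coideal,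
and the coefficient matrix `X` of that coideal is a comatrix; the entries of `X` span a space
containing the `d i`. -/
lemma exists_comatrix (c : H) : ∃ (n : ℕ) (X : Fin n → Fin n → H) (d : Fin n → H) (a : Fin n → k),
    IsComatrix k X ∧ (∀ i, comul (R := k) (d i) = ∑ j, X i j ⊗ₜ[k] d j) ∧
    (∀ i, d i = ∑ j, counit (R := k) (d j) • X i j) ∧ c = ∑ i, a i • d i := by
  classical
  -- The left coideal generated by `c` consists of the contractions `g(c₁) c₂`.
  let F : (H →ₗ[k] k) →ₗ[k] H :=
    { toFun := fun g => slice g (comul c)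
      map_add' := fun g g' => by simp [slice, LinearMap.rTensor_add]
      map_smul' := fun r g => by simp [slice, LinearMap.rTensor_smul] }
  have hF : ∀ g, F g = slice g (comul c) := fun _ => rfl
  let D : Submodule k H := LinearMap.range F
  have hcD : c ∈ D := ⟨counit, by rw [hF]; simp [slice]⟩
  have hDfin : FiniteDimensional k D := by
    have hle : D ≤ Submodule.span k ((ℛ k c).right '' ((ℛ k c).index : Set (H × H))) := by
      rintro _ ⟨g, rfl⟩
      rw [hF, ← (ℛ k c).eq, map_sum]
      refine Submodule.sum_mem _ fun i hi => ?_
      rw [slice_tmul]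
      exact Submodule.smul_mem _ _ (Submodule.subset_span ⟨i, hi, rfl⟩)
    have : FiniteDimensional k
        (Submodule.span k ((ℛ k c).right '' ((ℛ k c).index : Set (H × H)))) :=
      FiniteDimensional.span_of_finite k ((Finset.finite_toSet _).image _)
    exact Submodule.finiteDimensional_of_le hle
  -- Coassociativity: contracting twice is contracting once with the convolution product.
  have hD : ∀ y ∈ D, ∀ g : H →ₗ[k] k, slice g (comul y) ∈ D := by
    rintro _ ⟨g', rfl⟩ g
    refine ⟨LinearMap.mul' k k ∘ₗ TensorProduct.map g' g ∘ₗ comul, ?_⟩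
    have h3 : ∀ t : H ⊗[k] H, slice (LinearMap.mul' k k ∘ₗ TensorProduct.map g' g ∘ₗ comul) t =
        slice g (TensorProduct.lid k (H ⊗[k] H) (g'.rTensor (H ⊗[k] H)
          (TensorProduct.assoc k H H H (comul.rTensor H t)))) := by
      intro t
      induction t with
      | zero => simp
      | add u v hu hv => simp only [map_add, hu, hv]
      | tmul u v =>
        simp only [slice_tmul, LinearMap.rTensor_tmul, LinearMap.comp_apply]
        induction (comul (R := k) u : H ⊗[k] H) with
        | zero => simp
        | add x y hx hy => simp only [map_add, add_smul, TensorProduct.add_tmul, hx, hy]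
        | tmul x y => simp [mul_smul]
    have h4 : ∀ t : H ⊗[k] H, TensorProduct.lid k (H ⊗[k] H) (g'.rTensor (H ⊗[k] H)
        (comul.lTensor H t)) = comul (slice g' t) := by
      intro t
      induction t with
      | zero => simp
      | add u v hu hv => simp only [map_add, hu, hv]
      | tmul u v => simp
    rw [hF, h3, coassoc_apply, h4, hF]
  let b := Module.finBasis k D
  obtain ⟨p, hp⟩ := LinearMap.exists_leftInverse_of_injective D.subtype D.ker_subtype
  -- The coordinate functionals of `b`, extended from `D` to all of `H`.
  let φ : Fin (Module.finrank k D) → (H →ₗ[k] k) := fun j => b.coord j ∘ₗ p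
  have hφ : ∀ y ∈ D, y = ∑ j, φ j y • (b j : H) := by
    intro y hy
    have h1 : p y = ⟨y, hy⟩ := LinearMap.congr_fun hp ⟨y, hy⟩
    have h2 := congrArg D.subtype (b.sum_repr ⟨y, hy⟩)
    simp only [map_sum, map_smul, Submodule.subtype_apply] at h2
    simp only [φ, LinearMap.comp_apply, h1, Module.Basis.coord_apply]
    exact h2.symm
  have hφb : ∀ i j, φ j (b i : H) = if i = j then 1 else 0 := by
    intro i j
    have h1 : p (b i) = b i := LinearMap.congr_fun hp (b i)
    simp [φ, h1, Finsupp.single_apply]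
  let X : Fin (Module.finrank k D) → Fin (Module.finrank k D) → H := fun i j =>
    TensorProduct.rid k H ((φ j).lTensor H (comul (b i : H)))
  have hcom : ∀ i, comul (R := k) (b i : H) = ∑ j, X i j ⊗ₜ[k] (b j : H) := by
    intro i
    obtain ⟨s, he, hs⟩ := exists_sum_of_slice_mem D _ (hD (b i) (b i).2)
    simp only [X]
    rw [hs]
    simp only [map_sum, LinearMap.lTensor_tmul, TensorProduct.rid_tmul, TensorProduct.sum_tmul]
    rw [Finset.sum_comm]
    refine Finset.sum_congr rfl fun x hx => ?_
    conv_lhs => rw [hφ _ (he x hx), TensorProduct.tmul_sum]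
    simp [TensorProduct.smul_tmul]
  have hd : ∀ i, (b i : H) = ∑ j, counit (R := k) (b j : H) • X i j := by
    intro i
    have h := congrArg (TensorProduct.rid k H) (lTensor_counit_comul (R := k) (b i : H))
    rw [hcom] at h
    simpa using h.symm
  refine ⟨_, X, fun i => b i, fun i => φ i c, ⟨fun i j => ?_, fun i j => ?_⟩, hcom, hd, hφ c hcD⟩
  · have key := coassoc_apply (R := k) (b i : H)
    rw [hcom] at key
    have h2 := congrArg (TensorProduct.map LinearMap.id
      ((TensorProduct.rid k H).toLinearMap ∘ₗ (φ j).lTensor H)) key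
    simp only [map_sum, LinearMap.lTensor_tmul, LinearMap.rTensor_tmul, TensorProduct.map_tmul,
      LinearMap.id_apply, LinearMap.comp_apply, LinearEquiv.coe_coe] at h2
    refine Eq.trans ?_ h2
    have h3 : ∀ (t : H ⊗[k] H) (y : H), TensorProduct.map LinearMap.id
      ((TensorProduct.rid k H).toLinearMap ∘ₗ (φ j).lTensor H)
        (TensorProduct.assoc k H H H (t ⊗ₜ y)) = φ j y • t := by
      intro t y
      induction t with
      | zero => simp
      | tmul u v => simp
      | add u v hu hv => simp only [TensorProduct.add_tmul, map_add, hu, hv, smul_add]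
    simp only [h3, hφb]
    simp
  · have h := congrArg (fun t => TensorProduct.lid k k ((φ j).lTensor k t))
      (rTensor_counit_comul (R := k) (b i : H))
    simp only [hcom, map_sum, LinearMap.lTensor_tmul, LinearMap.rTensor_tmul, hφb,
      TensorProduct.lid_tmul] at h
    simpa using h

/-- The antipode reverses the comultiplication on the entries of a comatrix: both sides are entries
of an inverse of the matrix `(Δ xᵢⱼ)` over `H ⊗ H`. -/
lemma IsComatrix.comul_antipode {n : ℕ} {X : Fin n → Fin n → H} (hX : IsComatrix k X)
    (i j : Fin n) :
    comul (R := k) (antipode k (X i j)) = ∑ l, antipode k (X l j) ⊗ₜ[k] antipode k (X i l) := by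
  let A : Matrix (Fin n) (Fin n) (H ⊗[k] H) := Matrix.of fun i j => comul (R := k) (X i j)
  let B : Matrix (Fin n) (Fin n) (H ⊗[k] H) :=
    Matrix.of fun i j => comul (R := k) (antipode k (X i j))
  let C : Matrix (Fin n) (Fin n) (H ⊗[k] H) :=
    Matrix.of fun i j => ∑ l, antipode k (X l j) ⊗ₜ[k] antipode k (X i l)
  have hBA : B * A = 1 := by
    ext i j
    have h := congrArg (Bialgebra.comulAlgHom k H) (hX.antipode_mul i j)
    simpa [A, B, Matrix.mul_apply, Matrix.one_apply, apply_ite] using h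
  have hAC : A * C = 1 := by
    ext i j
    simp only [A, C, Matrix.mul_apply, Matrix.of_apply, hX.comul_eq, Finset.sum_mul_sum,
      Algebra.TensorProduct.tmul_mul_tmul]
    calc ∑ m, ∑ l, ∑ p, (X i l * antipode k (X p j)) ⊗ₜ[k] (X l m * antipode k (X m p))
        = ∑ l, ∑ p, (X i l * antipode k (X p j)) ⊗ₜ[k] ∑ m, X l m * antipode k (X m p) := by
          rw [Finset.sum_comm]
          refine Finset.sum_congr rfl fun l _ => ?_
          rw [Finset.sum_comm]
          simp only [TensorProduct.tmul_sum]
      _ = (∑ l, X i l * antipode k (X l j)) ⊗ₜ[k] 1 := by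
          rw [TensorProduct.sum_tmul]
          simp only [hX.mul_antipode]
          refine Finset.sum_congr rfl fun l _ => ?_
          rw [Finset.sum_eq_single l] <;> simp +contextual [eq_comm]
      _ = (1 : Matrix (Fin n) (Fin n) (H ⊗[k] H)) i j := by
          rw [hX.mul_antipode, Matrix.one_apply, Algebra.TensorProduct.one_def]
          split_ifs <;> simp
  exact Matrix.ext_iff.mpr (left_inv_eq_right_inv hBA hAC) i j

/-! ### Injectivity -/

/-- In a Noetherian module, the chain `N ≤ f N ≤ f² N ≤ ⋯` stabilises, so `f N = N` when `f` is
injective. -/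
lemma map_le_of_le_map {R M : Type*} [Ring R] [AddCommGroup M] [Module R M] [IsNoetherian R M]
    (f : M →ₗ[R] M) (hf : Function.Injective f) (N : Submodule R M) (hN : N ≤ N.map f) :
    N.map f ≤ N := by
  have hmono : Monotone fun m : ℕ => N.map (f ^ m) := by
    refine monotone_nat_of_le_succ fun m => ?_
    rw [pow_succ, Module.End.mul_eq_comp, Submodule.map_comp]
    exact Submodule.map_mono hN
  obtain ⟨m, hm⟩ := monotone_stabilizes_iff_noetherian.mpr ‹IsNoetherian R M› ⟨_, hmono⟩
  have h1 : N.map (f ^ m) = (N.map f).map (f ^ m) := by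
    rw [← Submodule.map_comp, ← Module.End.mul_eq_comp, ← pow_succ]
    exact hm (m + 1) (Nat.le_succ m)
  have hinj : Function.Injective (f ^ m) := by
    rw [Module.End.coe_pow]
    exact hf.iterate m
  exact (Submodule.map_injective_of_injective hinj h1).ge

/-- The antipode of a left Noetherian Hopf algebra is injective. -/
theorem antipode_injective [IsNoetherianRing H] : Function.Injective (antipode k (A := H)) := by
  rw [injective_iff_map_eq_zero]
  intro c hc
  obtain ⟨n, X, d, a, hX, hd, hdX, rfl⟩ := exists_comatrix (k := k) c
  -- `f` is `v ↦ v X` on row vectors, with inverse `v ↦ v S(X)`.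
  let f : (Fin n → H) →ₗ[H] (Fin n → H) :=
    { toFun := fun v j => ∑ i, v i * X i j
      map_add' := fun v w => by ext j; simp [add_mul, Finset.sum_add_distrib]
      map_smul' := fun r v => by ext j; simp [Finset.mul_sum, mul_assoc] }
  have hfg : ∀ v, f (fun j => ∑ i, v i * antipode k (X i j)) = v := by
    intro v
    ext j
    simp only [f, LinearMap.coe_mk, AddHom.coe_mk, Finset.sum_mul]
    rw [Finset.sum_comm]
    simp only [mul_assoc, ← Finset.mul_sum, hX.antipode_mul]
    simp
  have hf : Function.Injective f := by
    refine Function.LeftInverse.injective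
      (g := fun v j => ∑ i, v i * antipode k (X i j)) fun v => ?_
    ext j
    simp only [f, LinearMap.coe_mk, AddHom.coe_mk, Finset.sum_mul]
    rw [Finset.sum_comm]
    simp only [mul_assoc, ← Finset.mul_sum, hX.mul_antipode]
    simp
  let N : Submodule H (Fin n → H) :=
    { carrier := {v | ∑ i, v i ⊗ₜ[k] antipode k (d i) = 0}
      add_mem' := fun {v w} hv hw => by
        simp only [Set.mem_ofPred_eq] at hv hw ⊢
        simp [TensorProduct.add_tmul, Finset.sum_add_distrib, hv, hw]
      zero_mem' := by simp
      smul_mem' := fun r v hv => by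
        have h := congrArg (fun t => (r ⊗ₜ[k] (1 : H)) * t) hv
        simpa [Finset.mul_sum] using h }
  -- `S` carries the left coideal spanned by `d` to a right coideal.
  have hSd : ∀ i, comul (R := k) (antipode k (d i)) =
      ∑ j, antipode k (d j) ⊗ₜ[k] antipode k (X i j) := by
    intro i
    calc comul (R := k) (antipode k (d i))
        = ∑ j, ∑ l, antipode k (counit (R := k) (d j) • X l j) ⊗ₜ[k] antipode k (X i l) := by
          conv_lhs => rw [hdX i]
          simp [hX.comul_antipode, Finset.smul_sum, TensorProduct.smul_tmul']
      _ = _ := by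
          rw [Finset.sum_comm]
          refine Finset.sum_congr rfl fun l _ => ?_
          conv_rhs => rw [hdX l]
          simp [TensorProduct.sum_tmul]
  have hNg : ∀ v ∈ N, (fun j => ∑ i, v i * antipode k (X i j)) ∈ N := by
    intro v hv
    -- `Θ (v ⊗ w) = v w₂ ⊗ w₁`, which sends `∑ vᵢ ⊗ S(dᵢ)` to `∑ vᵢ S(xᵢⱼ) ⊗ S(dⱼ)`.
    let Θ : H ⊗[k] H →ₗ[k] H ⊗[k] H :=
      (LinearMap.mul' k H).rTensor H ∘ₗ (TensorProduct.assoc k H H H).symm.toLinearMap ∘ₗ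
        ((TensorProduct.comm k H H).toLinearMap ∘ₗ comul).lTensor H
    have h := congrArg Θ (show ∑ i, v i ⊗ₜ[k] antipode k (d i) = 0 from hv)
    simp only [Θ, map_sum, LinearMap.comp_apply, LinearMap.lTensor_tmul, hSd, LinearEquiv.coe_coe,
      TensorProduct.comm_tmul, TensorProduct.tmul_sum, TensorProduct.assoc_symm_tmul,
      LinearMap.rTensor_tmul, LinearMap.mul'_apply, map_zero] at h
    change ∑ j, (∑ i, v i * antipode k (X i j)) ⊗ₜ[k] antipode k (d j) = 0
    simp only [TensorProduct.sum_tmul]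
    rw [Finset.sum_comm]
    exact h
  have hNf : N.map f ≤ N := map_le_of_le_map f hf N fun v hv => ⟨_, hNg v hv, hfg v⟩
  have haN : (fun i => algebraMap k H (a i)) ∈ N := by
    change ∑ i, algebraMap k H (a i) ⊗ₜ[k] antipode k (d i) = 0
    have h : (1 : H) ⊗ₜ[k] antipode k (∑ i, a i • d i) = 0 := by rw [hc, TensorProduct.tmul_zero]
    simpa [TensorProduct.tmul_sum, Algebra.algebraMap_eq_smul_one, TensorProduct.smul_tmul] using h
  -- This is `∑ c₁ ⊗ S(c₂) = 0`; next apply `ε` to the second factor, using `ε ∘ S = ε`.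
  have h1 : ∑ j, (∑ i, algebraMap k H (a i) * X i j) ⊗ₜ[k] antipode k (d j) = 0 :=
    hNf ⟨_, haN, rfl⟩
  have h2 := congrArg (fun t => TensorProduct.rid k H ((counit (R := k) (A := H)).lTensor H t)) h1
  simp only [map_sum, LinearMap.lTensor_tmul, TensorProduct.rid_tmul, counit_antipode,
    Finset.smul_sum, map_zero] at h2
  rw [Finset.sum_comm] at h2
  rw [← h2]
  refine Finset.sum_congr rfl fun i _ => ?_
  conv_lhs => rw [hdX i]
  rw [Finset.smul_sum]
  refine Finset.sum_congr rfl fun j _ => ?_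
  rw [← Algebra.smul_def, smul_comm]

/-! ### Surjectivity -/

variable (k) in
/-- The square of the antipode, which is an algebra homomorphism because the antipode is
antimultiplicative. -/
noncomputable def antipodeSq : H →ₐ[k] H :=
  AlgHom.ofLinearMap (antipode k ∘ₗ antipode k) (by simp) (by simp [antipode_mul_antidistrib])

/-- The transpose of a comatrix over a left Noetherian Hopf algebra has a left inverse. -/
theorem exists_left_inverse [IsNoetherianRing H] {n : ℕ} {X : Fin n → Fin n → H}
    (hX : IsComatrix k X) :
    ∃ Z : Fin n → Fin n → H, ∀ m j, ∑ i, Z m i * X j i = if m = j then 1 else 0 := by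
  have hS := antipode_injective (k := k) (H := H)
  rcases subsingleton_or_nontrivial H with _ | _
  · exact ⟨fun _ _ => 0, fun _ _ => Subsingleton.elim _ _⟩
  -- `J` is the left ideal of all `h` for which the scalar matrix of `h` has the form `Z Xᵀ`.
  let J : Submodule H H :=
    { carrier := {h | ∃ Z : Fin n → Fin n → H, ∀ m j, ∑ i, Z m i * X j i = if m = j then h else 0}
      add_mem' := by
        rintro h h' ⟨Z, hZ⟩ ⟨Z', hZ'⟩
        refine ⟨fun m i => Z m i + Z' m i, fun m j => ?_⟩
        simp only [add_mul, Finset.sum_add_distrib, hZ, hZ']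
        split_ifs <;> simp
      zero_mem' := ⟨fun _ _ => 0, by simp⟩
      smul_mem' := by
        rintro r h ⟨Z, hZ⟩
        refine ⟨fun m i => r * Z m i, fun m j => ?_⟩
        simp only [mul_assoc, ← Finset.mul_sum, hZ]
        simp }
  have hJne : ∃ h ∈ J, h ≠ 0 := by
    by_contra! hJ
    let F : (Fin n → Fin n → H) →ₗ[H] (Fin n → Fin n → H) :=
      { toFun := fun Z m j => ∑ i, Z m i * X j i
        map_add' := fun v w => by ext m j; simp [add_mul, Finset.sum_add_distrib]
        map_smul' := fun r v => by ext m j; simp [Finset.mul_sum, mul_assoc] }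
    -- If `Z Xᵀ = 0`, then `S(X) S(Z)ᵀ = 0`, and `S(X)` is invertible.
    have hF : Function.Injective F := by
      rw [injective_iff_map_eq_zero]
      intro Z hZ
      ext m l
      apply hS
      have h : ∀ j, ∑ i, antipode k (X j i) * antipode k (Z m i) = 0 := by
        intro j
        have h1 : ∑ i, Z m i * X j i = 0 := congrFun (congrFun hZ m) j
        simpa [antipode_mul_antidistrib] using congrArg (antipode k) h1
      have h2 : ∑ j, X l j * ∑ i, antipode k (X j i) * antipode k (Z m i) = antipode k (Z m l) := by
        simp only [Finset.mul_sum, ← mul_assoc]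
        rw [Finset.sum_comm]
        simp only [← Finset.sum_mul, hX.mul_antipode]
        simp
      simp only [h] at h2
      simpa using h2.symm
    rcases isEmpty_or_nonempty (Fin n) with hn | ⟨⟨m₀⟩⟩
    · exact one_ne_zero (hJ 1 ⟨fun _ _ => 0, fun m => hn.elim m⟩)
    -- If `J = 0`, the image of `F` is independent of the scalar matrices, so `Mₙ(H) × H` embeds
    -- into the Noetherian module `Mₙ(H)`.
    let G : H →ₗ[H] (Fin n → Fin n → H) :=
      LinearMap.toSpanSingleton H _ fun m j => if m = j then 1 else 0
    have hinj : Function.Injective (F.coprod G) := by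
      rw [injective_iff_map_eq_zero]
      rintro ⟨Z, h⟩ hz
      have hz' : F Z = G (-h) := by
        rw [map_neg, ← add_eq_zero_iff_eq_neg]
        simpa using hz
      have hh : -h = 0 := hJ _ ⟨Z, fun m j => by
        have := congrFun (congrFun hz' m) j
        simpa [F, G] using this⟩
      rw [hh, map_zero] at hz'
      exact Prod.ext (hF (hz'.trans (map_zero F).symm)) (neg_eq_zero.mp hh)
    exact not_subsingleton H (IsNoetherian.subsingleton_of_prod_injective _ hinj)
  have hJco : ∀ h ∈ J, ∀ g : H →ₗ[k] k, slice g (comul h) ∈ J := by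
    rintro h ⟨Z, hZ⟩ g
    have hS2 : Function.Injective (antipodeSq k (H := H)).toLinearMap := hS.comp hS
    obtain ⟨ρ, hρ⟩ := LinearMap.exists_leftInverse_of_injective _ (LinearMap.ker_eq_bot.mpr hS2)
    -- `T = (S² ⊗ id) ∘ Δ`; contractions of `T y` are contractions of `Δ y`, since `S²` is injective.
    let T : H →ₐ[k] H ⊗[k] H :=
      (Algebra.TensorProduct.map (antipodeSq k) (AlgHom.id k H)).comp (Bialgebra.comulAlgHom k H)
    have hT : ∀ y, slice (g ∘ₗ ρ) (T y) = slice g (comul y) := by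
      intro y
      change slice (g ∘ₗ ρ) (TensorProduct.map (antipodeSq k).toLinearMap LinearMap.id
        (comul (R := k) y)) = _
      induction (comul (R := k) y : H ⊗[k] H) with
      | zero => simp
      | add u v hu hv => simp only [map_add, hu, hv]
      | tmul u v =>
        have : ρ (antipodeSq k u) = u := LinearMap.congr_fun hρ u
        simp [this]
    have hTX : ∀ j i, T (X j i) = ∑ l, antipodeSq k (X j l) ⊗ₜ[k] X l i := by
      intro j i
      simp [T, hX.comul_eq]
    have h1 : ∀ m j, ∑ i, T (Z m i) * ∑ l, antipodeSq k (X j l) ⊗ₜ[k] X l i =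
        if m = j then T h else 0 := by
      intro m j
      have := congrArg T (hZ m j)
      simpa [hTX, apply_ite] using this
    -- The transposes of `S²(X)` and `S(X)` are inverse to each other.
    have hinv : ∀ l b, ∑ j, antipodeSq k (X j l) * antipode k (X b j) =
        if b = l then 1 else 0 := by
      intro l b
      have := congrArg (antipode k) (hX.mul_antipode b l)
      simpa [antipodeSq, antipode_mul_antidistrib, apply_ite] using this
    have h2 : ∀ m b, ∑ i, T (Z m i) * (1 ⊗ₜ[k] X b i) = T h * (antipode k (X b m) ⊗ₜ[k] 1) := by
      intro m b
      calc ∑ i, T (Z m i) * (1 ⊗ₜ[k] X b i)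
          = ∑ i, T (Z m i) * ∑ l, (∑ j, antipodeSq k (X j l) * antipode k (X b j)) ⊗ₜ[k] X l i := by
            refine Finset.sum_congr rfl fun i _ => ?_
            simp only [hinv]
            rw [Finset.sum_eq_single b] <;> simp +contextual [eq_comm]
        _ = ∑ j, (∑ i, T (Z m i) * ∑ l, antipodeSq k (X j l) ⊗ₜ[k] X l i) *
              (antipode k (X b j) ⊗ₜ[k] 1) := by
            simp only [Finset.sum_mul, Finset.mul_sum, mul_assoc,
              Algebra.TensorProduct.tmul_mul_tmul, mul_one, TensorProduct.sum_tmul]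
            conv_rhs => rw [Finset.sum_comm]
            exact Finset.sum_congr rfl fun i _ => Finset.sum_comm
        _ = T h * (antipode k (X b m) ⊗ₜ[k] 1) := by
            simp only [h1]
            simp
    -- A matrix over `H ⊗ H` whose product with `1 ⊗ Xᵀ` is the scalar matrix of `T h`.
    have h3 : ∀ c b, ∑ i, (∑ m, T (Z m i) * (X m c ⊗ₜ[k] 1)) * (1 ⊗ₜ[k] X b i) =
        if c = b then T h else 0 := by
      intro c b
      calc ∑ i, (∑ m, T (Z m i) * (X m c ⊗ₜ[k] 1)) * (1 ⊗ₜ[k] X b i)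
          = ∑ m, (∑ i, T (Z m i) * (1 ⊗ₜ[k] X b i)) * (X m c ⊗ₜ[k] 1) := by
            simp only [Finset.sum_mul, mul_assoc, Algebra.TensorProduct.tmul_mul_tmul, mul_one,
              one_mul]
            rw [Finset.sum_comm]
        _ = T h * ((∑ m, antipode k (X b m) * X m c) ⊗ₜ[k] 1) := by
            simp only [h2, mul_assoc, Algebra.TensorProduct.tmul_mul_tmul, mul_one,
              TensorProduct.sum_tmul, Finset.mul_sum]
        _ = _ := by
            rw [hX.antipode_mul, eq_comm]
            simp only [eq_comm (a := c)]
            split_ifs <;> simp [← Algebra.TensorProduct.one_def]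
    have hsl : ∀ (g : H →ₗ[k] k) (t : H ⊗[k] H) (y : H),
        slice g (t * (1 ⊗ₜ[k] y)) = slice g t * y := by
      intro g t y
      induction t with
      | zero => simp
      | add u v hu hv => simp only [add_mul, map_add, hu, hv]
      | tmul u v => simp
    refine ⟨fun c i => slice (g ∘ₗ ρ) (∑ m, T (Z m i) * (X m c ⊗ₜ[k] 1)), fun c b => ?_⟩
    simp only [← hsl, ← map_sum, h3, ← hT]
    split_ifs <;> simp
  suffices h1 : (1 : H) ∈ J from h1
  -- `ε h = ∑ S(h₁) h₂` lies in `J`, and `h = ∑ h₁ ε(h₂)` vanishes if `ε` vanishes on `J`.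
  have hco : ∀ h ∈ J, algebraMap k H (counit h) ∈ J ∧ ((∀ y ∈ J, counit (R := k) y = 0) → h = 0) := by
    intro h hh
    obtain ⟨s, hs, ht⟩ := exists_sum_of_slice_mem (J.restrictScalars k) _ (hJco h hh)
    constructor
    · rw [← mul_antipode_rTensor_comul_apply, ht]
      simp only [map_sum, LinearMap.rTensor_tmul, LinearMap.mul'_apply]
      exact J.sum_mem fun p hp => J.smul_mem _ (hs p hp)
    · intro h0
      have h2 := congrArg (TensorProduct.rid k H) (lTensor_counit_comul (R := k) h)
      rw [ht] at h2
      simp only [map_sum, LinearMap.lTensor_tmul, TensorProduct.rid_tmul, one_smul] at h2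
      rw [← h2]
      exact Finset.sum_eq_zero fun p hp => by rw [h0 _ (hs p hp), zero_smul]
  obtain ⟨h, hh, hne⟩ := hJne
  have : ∃ y ∈ J, counit (R := k) y ≠ 0 := by
    by_contra! h0
    exact hne ((hco h hh).2 h0)
  obtain ⟨y, hy, hy0⟩ := this
  have h2 := J.smul_mem (algebraMap k H (counit (R := k) y)⁻¹) (hco y hy).1
  rwa [smul_eq_mul, ← map_mul, inv_mul_cancel₀ hy0, map_one] at h2

/-- The antipode of a left Noetherian Hopf algebra is surjective. -/
theorem antipode_surjective [IsNoetherianRing H] : Function.Surjective (antipode k (A := H)) := by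
  intro c
  obtain ⟨n, X, d, a, hX, hd, hdX, rfl⟩ := exists_comatrix (k := k) c
  obtain ⟨Z, hZ⟩ := exists_left_inverse hX
  -- Applying `S` to `Z Xᵀ = 1` shows that `S(Z)ᵀ` is the inverse of `S(X)`, which is `X`.
  have hSZ : ∀ l m, antipode k (Z m l) = X l m := by
    intro l m
    have h1 : ∀ j, ∑ i, antipode k (X j i) * antipode k (Z m i) = if m = j then 1 else 0 := by
      intro j
      simpa [antipode_mul_antidistrib, apply_ite] using congrArg (antipode k) (hZ m j)
    calc antipode k (Z m l) = ∑ j, X l j * ∑ i, antipode k (X j i) * antipode k (Z m i) := by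
          simp only [Finset.mul_sum, ← mul_assoc]
          rw [Finset.sum_comm]
          simp only [← Finset.sum_mul, hX.mul_antipode]
          simp
      _ = X l m := by simp [h1]
  refine ⟨∑ i, a i • ∑ j, counit (R := k) (d j) • Z j i, ?_⟩
  simp only [map_sum, map_smul, hSZ, ← hdX]

end NoetherianHopf

/-- (Skryabin) The antipode of a Noetherian, residually finite-dimensional Hopf algebra
is bijective. Residually finite-dimensional means that every nonzero element stays
nonzero in some finite-dimensional quotient by a two-sided ideal. -/
theorem antipode_bijective_of_noetherian_residuallyFinDim (k : Type*) [Field k]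
    (H : Type*) [Ring H] [HopfAlgebra k H] [IsNoetherianRing H]
    (hres : ∀ x : H, x ≠ 0 → ∃ I : Submodule k H,
      (∀ (a : H), ∀ y ∈ I, a * y ∈ I ∧ y * a ∈ I) ∧
      FiniteDimensional k (H ⧸ I) ∧ x ∉ I) :
    Function.Bijective (HopfAlgebra.antipode (R := k) (A := H)) := by
  exact ⟨NoetherianHopf.antipode_injective, NoetherianHopf.antipode_surjective⟩
end

section
/- (Sweedler) Let H be a Hopf algebra over a field k. Then the space of left integrals on H, i.e., the subspace of the dual space H* consisting of all linear functionals ∫ : H → k satisfying x₍₁₎·∫(x₍₂₎) = ∫(x)·1_H for all x ∈ H, has dimension at most 1 over k. -/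
/-!
Write `S` for the antipode and use Sweedler notation. Let `f` be a nonzero left integral.

* For every `x` the functional `y ↦ f (x₍₂₎ S y S³ x₍₁₎)` is a right integral
  (`IsLeftIntegral.rightInt_sw`), and these functionals recover `f` through
  `f x = f (x₍₃₎ S (S x₍₁₎) S³ x₍₂₎)` (`sw_rightInt`). Hence there is a right integral `ψ` and an
  element `q` with `ψ q ≠ 0`.
* For every left integral `g`, applying `ψ` to `x₍₁₎ g (x₍₂₎ S q) = g (x S q₍₁₎) q₍₂₎`
  (`IsLeftIntegral.strong_right`) gives `g (x w) = ψ x * g (S q)`, where `w = S q₍₁₎ ψ q₍₂₎`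
  satisfies `ε w = ψ q ≠ 0`.
* A left integral vanishing on `H w` with `ε w ≠ 0` is zero (`IsLeftIntegral.eq_zero_of_mul`).

So `g ↦ g (S q)` is injective on left integrals, and the space they form has dimension at most one.
The computations use that `S` reverses both products and coproducts; the latter is
`comul_antipode`, proved by uniqueness of convolution inverses.
-/

open TensorProduct

/-- A left integral on a Hopf algebra `H` over `k` is a linear functional `f : H → k`
such that `(id ⊗ f)(Δ x) = f x • 1` for all `x`, i.e. `x₍₁₎ • f x₍₂₎ = f x • 1`. -/
def IsLeftIntegral (k : Type*) [CommRing k] (H : Type*) [Ring H] [HopfAlgebra k H]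
    (f : H →ₗ[k] k) : Prop :=
  ∀ x : H, (TensorProduct.rid k H) (LinearMap.lTensor H f (Coalgebra.comul x)) = f x • (1 : H)

open Coalgebra HopfAlgebra

/-! ### Sweedler sums -/

section Sweedler

variable {k : Type*} [Field k] {H : Type*} [Ring H] [HopfAlgebra k H]
  {M N : Type*} [AddCommGroup M] [Module k M] [AddCommGroup N] [Module k N]

variable (k) in
/-- The Sweedler sum `∑ T x₍₁₎ x₍₂₎`, computed with a chosen representation of `Δ x`. It is
independent of that choice as soon as `T` is bilinear; `T` is left unbundled so that the body of
a sum can be written as a plain expression in the two legs. -/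
noncomputable def sw (x : H) (T : H → H → M) : M :=
  ∑ i ∈ (ℛ k x).index, T ((ℛ k x).left i) ((ℛ k x).right i)

variable (k) in
/-- Unbundled bilinearity. -/
structure Bilin (T : H → H → M) : Prop where
  add_left : ∀ a a' b, T (a + a') b = T a b + T a' b
  smul_left : ∀ (r : k) a b, T (r • a) b = r • T a b
  add_right : ∀ a b b', T a (b + b') = T a b + T a b'
  smul_right : ∀ (r : k) a b, T a (r • b) = r • T a b

variable (k) in
/-- Unbundled trilinearity. -/
structure Trilin (T : H → H → H → M) : Prop where
  left : ∀ c, Bilin k (fun a b => T a b c)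
  add_right : ∀ a b c c', T a b (c + c') = T a b c + T a b c'
  smul_right : ∀ (r : k) a b c, T a b (r • c) = r • T a b c

/-- The bundled form of a bilinear map. -/
def Bilin.mk₂ {T : H → H → M} (h : Bilin k T) : H →ₗ[k] H →ₗ[k] M :=
  LinearMap.mk₂ k T h.add_left h.smul_left h.add_right h.smul_right

/-- The linear map on the tensor square induced by a bilinear map. -/
noncomputable def Bilin.lift {T : H → H → M} (h : Bilin k T) : H ⊗[k] H →ₗ[k] M :=
  TensorProduct.lift h.mk₂

@[simp] lemma Bilin.lift_tmul {T : H → H → M} (h : Bilin k T) (a b : H) :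
    h.lift (a ⊗ₜ b) = T a b := rfl

lemma sw_eq_lift {T : H → H → M} (h : Bilin k T) (x : H) : sw k x T = h.lift (comul x) := by
  rw [← (ℛ k x).eq]; simp [sw]

lemma sw_add_base {T : H → H → M} (h : Bilin k T) (x y : H) :
    sw k (x + y) T = sw k x T + sw k y T := by
  simp [sw_eq_lift h]

lemma sw_smul_base {T : H → H → M} (h : Bilin k T) (r : k) (x : H) :
    sw k (r • x) T = r • sw k x T := by
  simp [sw_eq_lift h]

lemma sw_add (x : H) (T T' : H → H → M) :
    sw k x (fun a b => T a b + T' a b) = sw k x T + sw k x T' := Finset.sum_add_distrib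

lemma sw_smul (r : k) (x : H) (T : H → H → M) :
    sw k x (fun a b => r • T a b) = r • sw k x T := Finset.smul_sum.symm

lemma map_sw (L : M →ₗ[k] N) (x : H) (T : H → H → M) :
    L (sw k x T) = sw k x (fun a b => L (T a b)) := map_sum _ _ _

lemma mul_sw (z x : H) (T : H → H → H) : z * sw k x T = sw k x (fun a b => z * T a b) :=
  Finset.mul_sum _ _ _

lemma sw_mul (z x : H) (T : H → H → H) : sw k x T * z = sw k x (fun a b => T a b * z) :=
  Finset.sum_mul _ _ _

lemma sw_smul_vec (x : H) (T : H → H → k) (m : M) :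
    sw k x T • m = sw k x (fun a b => T a b • m) := Finset.sum_smul

lemma sw_comm (x y : H) (T : H → H → H → H → M) :
    sw k x (fun a b => sw k y (fun c d => T a b c d)) =
      sw k y (fun c d => sw k x (fun a b => T a b c d)) := Finset.sum_comm

lemma sw_coassoc {T : H → H → H → M} (h : Trilin k T) (x : H) :
    sw k x (fun a b => sw k a (fun c d => T c d b)) =
      sw k x (fun a b => sw k b (fun c d => T a c d)) := by
  let L : H ⊗[k] (H ⊗[k] H) →ₗ[k] M :=
    TensorProduct.lift (TensorProduct.lift.equiv (.id k) H H M ∘ₗ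
      (LinearMap.mk₂ k (fun a b => (⟨⟨fun c => T a b c, h.add_right a b⟩,
        fun r c => h.smul_right r a b c⟩ : H →ₗ[k] M))
        (fun a a' b => by ext c; exact (h.left c).add_left a a' b)
        (fun r a b => by ext c; exact (h.left c).smul_left r a b)
        (fun a b b' => by ext c; exact (h.left c).add_right a b b')
        (fun r a b => by ext c; exact (h.left c).smul_right r a b)))
  have hL : ∀ a b c, L (a ⊗ₜ (b ⊗ₜ c)) = T a b c := fun a b c => rfl
  have := congrArg L (sum_tmul_tmul_eq (ℛ k x) (fun i => ℛ k _) (fun i => ℛ k _))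
  simpa [hL, sw] using this

lemma sw_counit_left (f : H →ₗ[k] M) (x : H) :
    sw k x (fun a b => counit (R := k) a • f b) = f x := by
  conv_rhs => rw [← sum_counit_smul (R := k) (ℛ k x)]
  simp [sw]

lemma sw_counit_right (f : H →ₗ[k] M) (x : H) :
    sw k x (fun a b => counit (R := k) b • f a) = f x := by
  have := congrArg (TensorProduct.rid k M) (sum_map_tmul_counit_eq (R := k) f x (repr := ℛ k x))
  simpa only [sw, map_sum, TensorProduct.rid_tmul, one_smul] using this

lemma sw_antipode_mul (x : H) :
    sw k x (fun a b => antipode k a * b) = counit (R := k) x • (1 : H) :=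
  sum_antipode_mul_eq_smul (ℛ k x)

lemma sw_mul_antipode (x : H) :
    sw k x (fun a b => a * antipode k b) = counit (R := k) x • (1 : H) :=
  sum_mul_antipode_eq_smul (ℛ k x)

lemma sw_mul_base {T : H → H → M} (h : Bilin k T) (x y : H) :
    sw k (x * y) T = sw k x (fun a b => sw k y (fun c d => T (a * c) (b * d))) := by
  rw [sw_eq_lift h, Bialgebra.comul_mul, ← (ℛ k x).eq, ← (ℛ k y).eq, Finset.sum_mul_sum]
  simp [sw]

/-- Both sides are convolution inverse to `Δ` in `Hom (H, H ⊗ H)`. -/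
lemma comul_antipode (x : H) :
    comul (antipode k x) =
      sw k x (fun a b => antipode k b ⊗ₜ[k] antipode k a) := by
  have hG : Bilin k (fun a b : H => antipode k b ⊗ₜ[k] antipode k a) := by
    constructor <;> intros <;>
      simp [TensorProduct.add_tmul, TensorProduct.tmul_add, TensorProduct.smul_tmul']
  have key : WithConv.toConv (hG.lift ∘ₗ comul) = WithConv.toConv (comul ∘ₗ antipode k) := by
    refine left_inv_eq_right_inv (a := WithConv.toConv (comul (R := k) (A := H))) ?_
      LinearMap.comul_right_inv
    ext x
    rw [(ℛ k x).convMul_apply]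
    change sw k x (fun a b => hG.lift (comul a) * comul b) = _
    simp only [← sw_eq_lift hG]
    have e : ∀ a b : H, sw k a (fun a b => antipode k b ⊗ₜ[k] antipode k a) * comul b =
        sw k a (fun c d => (antipode k d ⊗ₜ[k] antipode k c) * comul b) :=
      fun a b => Finset.sum_mul _ _ _
    simp only [e]
    rw [sw_coassoc (T := fun c d b => (antipode k d ⊗ₜ[k] antipode k c) * comul b)]
    swap
    · constructor
      · intro c; constructor <;> intros <;>
          simp [TensorProduct.add_tmul, TensorProduct.tmul_add, add_mul,
            ← TensorProduct.smul_tmul']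
      · intros; simp [mul_add]
      · intros; simp
    have e2 : ∀ a b : H, sw k b (fun c d => (antipode k c ⊗ₜ[k] antipode k a) * comul d) =
        (1 : H) ⊗ₜ[k] (antipode k a * b) := by
      intro a b
      have hB : ∀ c : H, Bilin k (fun p r => (antipode k c * p) ⊗ₜ[k] (antipode k a * r)) := by
        intro c
        constructor <;> intros <;>
          simp [TensorProduct.add_tmul, TensorProduct.tmul_add, mul_add, TensorProduct.smul_tmul']
      have : ∀ c d : H, (antipode k c ⊗ₜ[k] antipode k a) * comul d =
          sw k d (fun p r => (antipode k c * p) ⊗ₜ[k] (antipode k a * r)) := by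
        intro c d
        rw [← (ℛ k d).eq]; simp [sw, Finset.mul_sum]
      simp only [this]
      rw [← sw_coassoc (T := fun c p r => (antipode k c * p) ⊗ₜ[k] (antipode k a * r))]
      swap
      · constructor
        · intro c; constructor <;> intros <;>
            simp [TensorProduct.add_tmul, TensorProduct.smul_tmul', mul_add, add_mul]
        · intros; simp [mul_add, TensorProduct.tmul_add]
        · intros; simp
      have : ∀ u v : H, sw k u (fun c d => (antipode k c * d) ⊗ₜ[k] (antipode k a * v)) =
          counit (R := k) u • ((1 : H) ⊗ₜ[k] (antipode k a * v)) := by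
        intro u v
        rw [TensorProduct.smul_tmul', ← sw_antipode_mul]
        simp [sw, TensorProduct.sum_tmul]
      simp only [this]
      exact sw_counit_left (TensorProduct.mk k H H 1 ∘ₗ LinearMap.mulLeft k (antipode k a)) b
    simp only [e2]
    have := map_sw (TensorProduct.mk k H H 1) x (fun a b => antipode k a * b)
    simp only [TensorProduct.mk_apply] at this
    rw [← this, sw_antipode_mul]
    simp [Algebra.algebraMap_eq_smul_one, Algebra.TensorProduct.one_def]
  rw [sw_eq_lift hG]
  exact (congrArg (fun f => f.ofConv x) key).symm

lemma sw_antipode_base {T : H → H → M} (h : Bilin k T) (x : H) :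
    sw k (antipode k x) T = sw k x (fun a b => T (antipode k b) (antipode k a)) := by
  rw [sw_eq_lift h, comul_antipode, map_sw]; rfl

end Sweedler

/-! ### Integrals -/

section Integrals

variable {k : Type*} [Field k] {H : Type*} [Ring H] [HopfAlgebra k H] {f : H →ₗ[k] k}

local notation "S" => antipode k (A := H)

lemma bilin_smul_fst (f : H →ₗ[k] k) : Bilin k (fun a b : H => f b • a) := by
  constructor <;> intros <;> simp [add_smul, smul_smul, mul_comm]

lemma IsLeftIntegral.sw_eq (hf : IsLeftIntegral k H f) (x : H) :
    sw k x (fun a b => f b • a) = f x • (1 : H) := by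
  rw [← hf x, ← (ℛ k x).eq]; simp [sw]

/-- `y₍₁₎ f (x y₍₂₎) = S x₍₁₎ f (x₍₂₎ y)`. -/
lemma IsLeftIntegral.strong_left (hf : IsLeftIntegral k H f) (x y : H) :
    sw k y (fun c d => f (x * d) • c) = sw k x (fun a b => f (b * y) • S a) := by
  have e1 : ∀ a b : H, f (b * y) • S a =
      sw k b (fun b₁ b₂ => sw k y (fun c d => f (b₂ * d) • (S a * b₁ * c))) := by
    intro a b
    rw [← mul_one (S a), ← mul_smul_comm, ← hf.sw_eq, sw_mul_base (bilin_smul_fst f), mul_sw]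
    simp only [mul_sw, mul_smul_comm, mul_assoc, mul_one]
  simp only [e1]
  rw [← sw_coassoc (T := fun a b₁ b₂ => sw k y (fun c d => f (b₂ * d) • (S a * b₁ * c)))]
  swap
  · constructor
    · intro c; constructor <;> intros <;> simp [add_mul, mul_add, sw_add, ← sw_smul, smul_smul, mul_comm]
    · intros; simp [add_mul, add_smul, sw_add]
    · intros; simp [← sw_smul, smul_smul]
  have e2 : ∀ u b : H, sw k u (fun a₁ a₂ => sw k y (fun c d => f (b * d) • (S a₁ * a₂ * c))) =
      sw k y (fun c d => counit (R := k) u • f (b * d) • c) := by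
    intro u b
    rw [sw_comm]
    congr 1; ext c d
    rw [sw_smul, ← sw_mul, sw_antipode_mul]
    simp [smul_smul, mul_comm]
  simp only [e2]
  rw [sw_comm]
  congr 1; ext c d
  exact (sw_counit_left ((f ∘ₗ LinearMap.mulRight k d).smulRight c) x).symm

/-- `x₍₁₎ f (x₍₂₎ S q) = f (x S q₍₁₎) q₍₂₎`. -/
lemma IsLeftIntegral.strong_right (hf : IsLeftIntegral k H f) (x q : H) :
    sw k x (fun a b => f (b * S q) • a) = sw k q (fun c d => f (x * S c) • d) := by
  have e1 : ∀ c d : H, f (x * S c) • d =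
      sw k c (fun c₁ c₂ => sw k x (fun a b => f (b * S c₁) • (a * (S c₂ * d)))) := by
    intro c d
    rw [sw_comm, ← one_mul d, ← smul_mul_assoc, ← hf.sw_eq, sw_mul_base (bilin_smul_fst f), sw_mul]
    congr 1; ext a b
    rw [sw_antipode_base, sw_mul]
    · simp only [smul_mul_assoc, mul_assoc, one_mul]
    · constructor <;> intros <;> simp [mul_add, add_smul, smul_smul, mul_comm]
  simp only [e1]
  rw [sw_coassoc (T := fun c₁ c₂ d => sw k x (fun a b => f (b * S c₁) • (a * (S c₂ * d))))]
  swap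
  · constructor
    · intro c; constructor <;> intros <;>
        simp [add_mul, mul_add, sw_add, ← sw_smul, add_smul, smul_smul, mul_comm]
    · intros; simp [mul_add, sw_add]
    · intros; simp [← sw_smul, smul_smul, mul_comm]
  have e2 : ∀ c u : H, sw k u (fun d₁ d₂ => sw k x (fun a b => f (b * S c) • (a * (S d₁ * d₂)))) =
      sw k x (fun a b => counit (R := k) u • f (b * S c) • a) := by
    intro c u
    rw [sw_comm]
    congr 1; ext a b
    rw [sw_smul, ← mul_sw, sw_antipode_mul]
    simp [smul_smul, mul_comm]
  simp only [e2]
  rw [sw_comm]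
  congr 1; ext a b
  exact (sw_counit_right ((f ∘ₗ LinearMap.mulLeft k b ∘ₗ antipode k).smulRight a) q).symm

/-- If `f` vanishes on the left ideal `H w`, then `f = 0` unless `ε w = 0`: by `strong_left` the
tensor `w₍₁₎ ⊗ w₍₂₎` has its second leg in `{n | f (H n) = 0}`, which is a left ideal and so
contains `S w₍₁₎ w₍₂₎ = ε w`. -/
lemma IsLeftIntegral.eq_zero_of_mul (hf : IsLeftIntegral k H f) {w : H}
    (hw : ∀ x, f (x * w) = 0) (hε : counit (R := k) w ≠ 0) : f = 0 := by
  have h0 : ∀ x, sw k w (fun c d => f (x * d) • c) = 0 := by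
    intro x; rw [hf.strong_left]; simp [hw, sw]
  let B := Module.Basis.ofVectorSpace k H
  obtain ⟨c, hc⟩ := TensorProduct.eq_repr_basis_left B (comul (R := k) w)
  have h1 : ∀ x i, f (x * c i) = 0 := by
    intro x i
    have hb : Bilin k (fun c d : H => f (x * d) • c) := by
      constructor <;> intros <;> simp [mul_add, add_smul, smul_smul, mul_comm]
    have h2 := h0 x
    rw [sw_eq_lift hb, ← hc, Finsupp.sum, map_sum] at h2
    simp only [Bilin.lift_tmul] at h2
    by_cases hi : i ∈ c.support
    · exact linearIndependent_iff'.1 B.linearIndependent c.support _ h2 i hi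
    · simp [Finsupp.notMem_support_iff.1 hi]
  ext x
  have hb : Bilin k (fun c d : H => f (x * (S c * d))) := by
    constructor <;> intros <;> simp [mul_add, add_mul]
  have h3 : sw k w (fun c d => f (x * (S c * d))) = 0 := by
    rw [sw_eq_lift hb, ← hc, Finsupp.sum, map_sum]
    exact Finset.sum_eq_zero fun i _ => by rw [Bilin.lift_tmul, ← mul_assoc, h1]
  have h4 := map_sw (f ∘ₗ LinearMap.mulLeft k x) w (fun c d : H => S c * d)
  simp only [LinearMap.comp_apply, LinearMap.mulLeft_apply] at h4
  rw [h3, sw_antipode_mul] at h4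
  simpa [hε] using h4

/-- The functional `y ↦ f (x₍₂₎ S y S³ x₍₁₎)`. It arises as the trace of a finite-rank operator
built from `f`, and it is a right integral for every `x` when `f` is a left integral. -/
noncomputable def rightInt (f : H →ₗ[k] k) (x : H) : H →ₗ[k] k where
  toFun y := sw k x (fun z a => f (a * S y * S (S (S z))))
  map_add' y y' := by simp [mul_add, add_mul, sw_add]
  map_smul' r y := by
    have := sw_smul (k := k) r x (fun z a => f (a * S y * S (S (S z))))
    simpa using this

lemma rightInt_apply (f : H →ₗ[k] k) (x y : H) :
    rightInt f x y = sw k x (fun z a => f (a * S y * S (S (S z)))) := rfl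

/-- `f (a S y₍₁₎ S³ z) y₍₂₎ = S z₍₂₎ a₍₁₎ f (a₍₂₎ S y S³ z₍₁₎)`. -/
lemma IsLeftIntegral.twisted (hf : IsLeftIntegral k H f) (z a y : H) :
    sw k y (fun y₁ y₂ => f (a * S y₁ * S (S (S z))) • y₂) =
      sw k z (fun z₁ z₂ => S z₂ * sw k a (fun a₁ a₂ => f (a₂ * S y * S (S (S z₁))) • a₁)) := by
  have e1 : ∀ z₁ z₂ : H, S z₂ * sw k a (fun a₁ a₂ => f (a₂ * S y * S (S (S z₁))) • a₁) =
      sw k z₁ (fun p r => sw k y (fun y₁ y₂ =>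
        f (a * S y₁ * S (S (S p))) • (S z₂ * S (S r) * y₂))) := by
    intro z₁ z₂
    have hb : Bilin k (fun c d : H => f (a * S c) • d) := by
      constructor <;> intros <;> simp [mul_add, add_smul, smul_smul, mul_comm]
    have := hf.strong_right a (S (S z₁) * y)
    simp only [antipode_mul_antidistrib, ← mul_assoc] at this
    rw [this, sw_mul_base hb, sw_antipode_base, sw_antipode_base, mul_sw]
    · simp only [mul_sw, antipode_mul_antidistrib, mul_smul_comm, mul_assoc]
    all_goals
      constructor <;> intros <;>
        simp [mul_add, add_mul, add_smul, sw_add, ← sw_smul, smul_smul, mul_comm]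
  simp only [e1]
  rw [sw_coassoc (T := fun p r z₂ => sw k y (fun y₁ y₂ =>
        f (a * S y₁ * S (S (S p))) • (S z₂ * S (S r) * y₂)))]
  swap
  · constructor
    · intro c; constructor <;> intros <;>
        simp [add_mul, mul_add, sw_add, ← sw_smul, add_smul, smul_smul, mul_comm]
    · intros; simp [add_mul, sw_add]
    · intros; simp [← sw_smul, smul_smul, mul_comm]
  have e2 : ∀ u v : H, sw k v (fun r z₂ => sw k y (fun y₁ y₂ =>
        f (a * S y₁ * S (S (S u))) • (S z₂ * S (S r) * y₂))) =
      sw k y (fun y₁ y₂ => counit (R := k) v • f (a * S y₁ * S (S (S u))) • y₂) := by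
    intro u v
    rw [sw_comm]
    congr 1; ext y₁ y₂
    simp only [← antipode_mul_antidistrib]
    rw [sw_smul, ← sw_mul, ← map_sw, sw_antipode_mul]
    simp [smul_smul, mul_comm]
  simp only [e2]
  rw [sw_comm]
  congr 1; ext y₁ y₂
  exact (sw_counit_right ((f ∘ₗ LinearMap.mulLeft k (a * S y₁) ∘ₗ antipode k ∘ₗ antipode k ∘ₗ
    antipode k).smulRight y₂) z).symm

lemma IsLeftIntegral.rightInt_sw (hf : IsLeftIntegral k H f) (x y : H) :
    sw k y (fun y₁ y₂ => rightInt f x y₁ • y₂) = rightInt f x y • (1 : H) := by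
  have hb : ∀ z, Bilin k (fun a₁ a₂ : H => f (a₂ * S y * S (S (S z))) • a₁) := by
    intro z
    constructor <;> intros <;> simp [add_mul, add_smul, smul_smul, mul_comm]
  simp only [rightInt_apply, sw_smul_vec]
  rw [sw_comm]
  simp only [hf.twisted]
  rw [sw_coassoc (T := fun z₁ z₂ a =>
    S z₂ * sw k a (fun a₁ a₂ => f (a₂ * S y * S (S (S z₁))) • a₁))]
  swap
  · constructor
    · intro c; constructor <;> intros <;>
        simp [add_mul, mul_add, sw_add, add_smul, mul_smul, sw_smul]
    · intros; simp [sw_add_base (hb _), mul_add]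
    · intros; simp [sw_smul_base (hb _)]
  congr 1; ext z a
  simp only [mul_sw]
  rw [← sw_coassoc (T := fun p a₁ a₂ => S p * f (a₂ * S y * S (S (S z))) • a₁)]
  swap
  · constructor
    · intro c; constructor <;> intros <;> simp [add_mul, mul_add, smul_smul, mul_comm]
    · intros; simp [add_mul, mul_add, add_smul]
    · intros; simp [smul_smul]
  simp only [mul_smul_comm, sw_smul, sw_antipode_mul]
  have := sw_counit_left ((f ∘ₗ LinearMap.mulRight k (S y * S (S (S z)))).smulRight (1 : H)) a
  simpa [mul_assoc, smul_smul, mul_comm] using this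

/-- The right integrals `rightInt f x` recover `f`, so they do not all vanish if `f ≠ 0`. -/
lemma sw_rightInt (f : H →ₗ[k] k) (x : H) :
    sw k x (fun a b => rightInt f b (S a)) = f x := by
  simp only [rightInt_apply]
  rw [← sw_coassoc (T := fun a z b => f (b * S (S a) * S (S (S z))))]
  swap
  · constructor
    · intro c; constructor <;> intros <;> simp [add_mul, mul_add]
    · intros; simp [add_mul]
    · intros; simp
  have e : ∀ a b : H, sw k a (fun c d => f (b * S (S c) * S (S (S d)))) =
      counit (R := k) a • f b := by
    intro a b
    have := map_sw (f ∘ₗ LinearMap.mulLeft k b ∘ₗ antipode k ∘ₗ antipode k) a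
      (fun c d => c * S d)
    rw [sw_mul_antipode] at this
    simpa [antipode_mul_antidistrib, mul_assoc] using this.symm
  simp only [e]
  exact sw_counit_left f x

/-- Given a right integral `ψ` and `q` with `ψ q ≠ 0`, a left integral is determined by its value
at `S q`: the element `w = S q₍₁₎ ψ q₍₂₎` has `ε w = ψ q` and `f (x w) = ψ x f (S q)`. -/
lemma IsLeftIntegral.eq_zero_of_apply (hf : IsLeftIntegral k H f) {ψ : H →ₗ[k] k}
    (hψ : ∀ y : H, sw k y (fun a b => ψ a • b) = ψ y • (1 : H)) {q : H} (hq : ψ q ≠ 0)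
    (h : f (S q) = 0) : f = 0 := by
  refine hf.eq_zero_of_mul (w := sw k q (fun c d => ψ d • S c)) (fun x => ?_) ?_
  · have h1 := congrArg ψ (hf.strong_right x q)
    rw [map_sw, map_sw] at h1
    have h2 := congrArg (f ∘ₗ LinearMap.mulRight k (S q)) (hψ x)
    rw [map_sw] at h2
    have h3 := map_sw (f ∘ₗ LinearMap.mulLeft k x) q (fun c d => ψ d • S c)
    simp only [LinearMap.comp_apply, LinearMap.mulLeft_apply, LinearMap.mulRight_apply, map_smul,
      one_mul, smul_eq_mul, h, mul_zero] at h1 h2 h3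
    rw [h3]
    simp only [mul_comm (ψ _)] at h2 ⊢
    rw [← h1, h2]
  · rw [map_sw]
    have := sw_counit_left ψ q
    simp only [map_smul, counit_antipode, smul_eq_mul, mul_comm (ψ _)] at this ⊢
    rwa [this]

variable (k H) in
/-- The left integrals on `H`, as a subspace of the dual of `H`. -/
def leftIntegrals : Submodule k (H →ₗ[k] k) where
  carrier := {f | IsLeftIntegral k H f}
  add_mem' {f g} hf hg x := by
    have h1 := hf x
    have h2 := hg x
    rw [LinearMap.lTensor_add, LinearMap.add_apply, map_add, h1, h2, LinearMap.add_apply, add_smul]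
  zero_mem' x := by simp
  smul_mem' r f hf x := by
    have h1 := hf x
    rw [LinearMap.lTensor_smul, LinearMap.smul_apply, map_smul, h1, LinearMap.smul_apply,
      smul_assoc]

end Integrals

/-- (Sweedler) The space of left integrals on a Hopf algebra has dimension at most 1. -/
theorem rank_leftIntegrals_le_one (k : Type*) [Field k]
    (H : Type*) [Ring H] [HopfAlgebra k H] :
    Module.rank k ↥(Submodule.span k {f : H →ₗ[k] k | IsLeftIntegral k H f}) ≤ 1 := by
  have hI : Submodule.span k {f : H →ₗ[k] k | IsLeftIntegral k H f} =
      leftIntegrals k H := Submodule.span_eq (leftIntegrals k H)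
  rw [hI]
  by_cases hz : ∀ f : H →ₗ[k] k, IsLeftIntegral k H f → f = 0
  · have : leftIntegrals k H = ⊥ := (Submodule.eq_bot_iff _).2 fun f hf => hz f hf
    rw [this]; simp
  push Not at hz
  obtain ⟨f, hf, hf0⟩ := hz
  obtain ⟨x, q, hq⟩ : ∃ x q, rightInt f x q ≠ 0 := by
    by_contra! hcon
    apply hf0
    ext x
    rw [← sw_rightInt f x]
    simp [hcon, sw]
  let E : leftIntegrals k H →ₗ[k] k := LinearMap.applyₗ (antipode k q) ∘ₗ (leftIntegrals k H).subtype
  have hE : Function.Injective E := by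
    intro g g' h
    have hd := IsLeftIntegral.eq_zero_of_apply ((leftIntegrals k H).sub_mem g.2 g'.2)
      (hf.rightInt_sw x) hq (sub_eq_zero.2 h)
    exact Subtype.ext (sub_eq_zero.1 hd)
  have := LinearMap.lift_rank_le_of_injective E hE
  simpa using this
end
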